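/- arXiv:1309.4415 — 3 statements merged into one kernel-verified Lean document; each statement's English description precedes it below -/
import Mathlib

section
/- Let P = Σ_{i=0}^n M_{p_i} ∘ D^i be an element of W with n ≥ 1 whose leading coefficient p_n is a nonzero constant polynomial. Then the centralizer C_W(P) = { Q ∈ W : P∘Q = Q∘P } is a free module over the subalgebra ℂ[P] of W generated by P, with a basis containing at most n elements. -/
noncomputable section

/-- The formal differentiation operator on `ℂ[y]` as a ℂ-linear endomorphism. -/
def D : Module.End ℂ (Polynomial ℂ) := Polynomial.derivative

/-- The multiplication operator `M f : g ↦ f * g` on `ℂ[y]`. -/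
def M : Polynomial ℂ → Module.End ℂ (Polynomial ℂ) :=
  fun f => LinearMap.mul ℂ (Polynomial ℂ) f

/-- The Weyl algebra `W`: the ℂ-subalgebra of `End_ℂ(ℂ[y])` generated by `D`
together with all multiplication operators `M f`, `f ∈ ℂ[y]`. -/
def W : Subalgebra ℂ (Module.End ℂ (Polynomial ℂ)) := Algebra.adjoin ℂ ({D} ∪ Set.range M)

/-!
The commutator `δ = [·, y]` is a derivation of the Weyl algebra that lowers the order of
differential operators, and `δ ^ m` turns an operator of order `m` into `m!` times its leading
coefficient. Let `P` have order `n` and scalar leading coefficient, and let `Q` of order `m` commute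
with `P`. Applying `δ ^ (n - 1 + m)` to `[P, Q] = 0` shows that `δ ^ (n - 1) P`, which is a nonzero
multiple of `D` plus a multiplication operator, commutes with the leading coefficient of `Q`; so
that coefficient has zero derivative and is a scalar as well.

Hence two elements of the centralizer of equal order agree up to a scalar and terms of lower order.
Choosing an element of least order in each residue class modulo `n` occurring among the orders gives
a basis: multiplying by powers of `P` realizes all other orders, and the orders of the terms in a
`K[P]`-combination are distinct because they are distinct modulo `n`.
-/

section Leibniz

open Finset

variable {R V₁ V₂ V₃ : Type*} [CommSemiring R] [AddCommMonoid V₁] [AddCommMonoid V₂]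
  [AddCommMonoid V₃] [Module R V₁] [Module R V₂] [Module R V₃]
  {δ₁ : Module.End R V₁} {δ₂ : Module.End R V₂} {δ₃ : Module.End R V₃} {B : V₁ →ₗ[R] V₂ →ₗ[R] V₃}

theorem pow_apply_bilinear_eq_sum (hB : ∀ a b, δ₃ (B a b) = B (δ₁ a) b + B a (δ₂ b))
    (n : ℕ) (a : V₁) (b : V₂) :
    (δ₃ ^ n) (B a b) =
      ∑ ij ∈ antidiagonal n, n.choose ij.1 • B ((δ₁ ^ ij.1) a) ((δ₂ ^ ij.2) b) := by
  induction n with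
  | zero => simp
  | succ n ih =>
    rw [sum_antidiagonal_choose_succ_nsmul fun i j => B ((δ₁ ^ i) a) ((δ₂ ^ j) b)]
    simp only [pow_succ', Module.End.mul_apply, ih, map_sum, map_nsmul, hB, smul_add,
      sum_add_distrib]
    rw [add_comm]
    congr 1
    refine sum_congr rfl fun ⟨i, j⟩ hij => ?_
    rw [n.choose_symm_of_eq_add (mem_antidiagonal.1 hij).symm]

theorem pow_add_apply_bilinear (hB : ∀ a b, δ₃ (B a b) = B (δ₁ a) b + B a (δ₂ b))
    {k l : ℕ} {a : V₁} {b : V₂} (ha : ∀ i > k, ∀ j, B ((δ₁ ^ i) a) ((δ₂ ^ j) b) = 0)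
    (hb : ∀ j > l, (δ₂ ^ j) b = 0) :
    (δ₃ ^ (k + l)) (B a b) = (k + l).choose k • B ((δ₁ ^ k) a) ((δ₂ ^ l) b) := by
  rw [pow_apply_bilinear_eq_sum hB, sum_eq_single (k, l)]
  · rintro ⟨i, j⟩ hij hne
    have hsum : i + j = k + l := mem_antidiagonal.1 hij
    rcases lt_trichotomy i k with hik | rfl | hik
    · simp [hb j (by lia)]
    · exact absurd (by rw [Nat.add_left_cancel hsum]) hne
    · simp [ha i hik j]
  · simp

end Leibniz

theorem exists_residue_representatives {n : ℕ} (hn : 0 < n) (O : Set ℕ) :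
    ∃ r ≤ n, ∃ o : Fin r → ℕ, (∀ i, o i ∈ O) ∧ Function.Injective (fun i => o i % n) ∧
      ∀ d ∈ O, ∃ i k, d = n * k + o i := by
  classical
  let residues : Finset ℕ := (Finset.range n).filter fun j => ∃ d ∈ O, d % n = j
  let e := residues.equivFin.symm
  let fiber (j : ℕ) : Set ℕ := {d ∈ O | d % n = j}
  have hmin (i) : sInf (fiber (e i)) ∈ fiber (e i) :=
    Nat.sInf_mem (Finset.mem_filter.1 (e i).2).2
  refine ⟨residues.card, ?_, fun i => sInf (fiber (e i)), fun i => (hmin i).1, ?_, ?_⟩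
  · simpa using Finset.card_filter_le (Finset.range n) fun j => ∃ d ∈ O, d % n = j
  · intro i j hij
    simp only [(hmin i).2, (hmin j).2] at hij
    exact e.injective (Subtype.ext hij)
  · intro d hd
    have hres : d % n ∈ residues :=
      Finset.mem_filter.2 ⟨Finset.mem_range.2 (Nat.mod_lt d hn), d, hd, rfl⟩
    obtain ⟨i, hi⟩ := e.surjective ⟨d % n, hres⟩
    have hdi : d ∈ fiber (e i) := ⟨hd, by rw [hi]⟩
    have hle : sInf (fiber (e i)) ≤ d := Nat.sInf_le hdi
    obtain ⟨k, hk⟩ := (Nat.modEq_iff_dvd' hle).1 ((hmin i).2.trans hdi.2.symm)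
    exact ⟨i, k, by lia⟩

section Derivation

variable {R A : Type*} [CommRing R] [Ring A] [Algebra R A]

/-- `δ` is a derivation of the possibly noncommutative algebra `A`; Mathlib's `Derivation` only
covers derivations of commutative algebras. -/
def IsDerivation (δ : Module.End R A) : Prop := ∀ a b, δ (a * b) = δ a * b + a * δ b

theorem isDerivation_mulRight_sub_mulLeft (x : A) :
    IsDerivation (LinearMap.mulRight R x - LinearMap.mulLeft R x) := fun a b => by
  simp only [LinearMap.sub_apply, LinearMap.mulRight_apply, LinearMap.mulLeft_apply]
  noncomm_ring

variable {δ : Module.End R A}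

namespace IsDerivation

theorem map_one (hδ : IsDerivation δ) : δ 1 = 0 := by simpa using hδ 1 1

theorem map_commutator (hδ : IsDerivation δ) (a b : A) :
    δ (a * b - b * a) = (δ a * b - b * δ a) + (a * δ b - δ b * a) := by
  rw [map_sub, hδ a b, hδ b a]
  abel

theorem pow_add_apply_mul (hδ : IsDerivation δ) {k l : ℕ} {a b : A}
    (ha : ∀ i > k, (δ ^ i) a = 0) (hb : ∀ j > l, (δ ^ j) b = 0) :
    (δ ^ (k + l)) (a * b) = (k + l).choose k • ((δ ^ k) a * (δ ^ l) b) :=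
  pow_add_apply_bilinear (B := LinearMap.mul R A) hδ (fun i hi j => by simp [ha i hi]) hb

theorem pow_add_apply_commutator (hδ : IsDerivation δ) {k l : ℕ} {a b : A}
    (ha : ∀ i > k, ∀ d, Commute ((δ ^ i) a) d) (hb : ∀ j > l, (δ ^ j) b = 0) :
    (δ ^ (k + l)) (a * b - b * a) =
      (k + l).choose k • ((δ ^ k) a * (δ ^ l) b - (δ ^ l) b * (δ ^ k) a) :=
  pow_add_apply_bilinear (B := LinearMap.mul R A - (LinearMap.mul R A).flip) hδ.map_commutator
    (fun i hi _ => sub_eq_zero.2 (ha i hi _)) hb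

theorem pow_add_apply_mul_eq_zero (hδ : IsDerivation δ) {k l : ℕ} {a b : A}
    (ha : (δ ^ k) a = 0) (hb : (δ ^ (l + 1)) b = 0) : (δ ^ (k + l)) (a * b) = 0 := by
  rw [hδ.pow_add_apply_mul (fun i hi => Module.End.pow_map_zero_of_le hi.le ha)
    (fun j hj => Module.End.pow_map_zero_of_le hj hb), ha, zero_mul, smul_zero]

/-- The subalgebra of elements on which the derivation `δ` is nilpotent. -/
def nilpotentSubalgebra (hδ : IsDerivation δ) : Subalgebra R A where
  carrier := {a | ∃ k, (δ ^ k) a = 0}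
  mul_mem' := by
    rintro a b ⟨k, ha⟩ ⟨l, hb⟩
    exact ⟨k + l, hδ.pow_add_apply_mul_eq_zero ha (Module.End.pow_map_zero_of_le l.le_succ hb)⟩
  add_mem' := by
    rintro a b ⟨k, ha⟩ ⟨l, hb⟩
    refine ⟨max k l, ?_⟩
    rw [map_add, Module.End.pow_map_zero_of_le (le_max_left k l) ha,
      Module.End.pow_map_zero_of_le (le_max_right k l) hb, add_zero]
  algebraMap_mem' c := ⟨1, by
    rw [pow_one, Algebra.algebraMap_eq_smul_one, map_smul, hδ.map_one, smul_zero]⟩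

end IsDerivation

end Derivation

section ScalarSymbol

variable {K A : Type*} [Field K] [Ring A] [Algebra K A] {δ : Module.End K A}

/-- `a` has order `m` with respect to `δ`, and its symbol `δ ^ m a` is a nonzero scalar. -/
def HasScalarSymbol (δ : Module.End K A) (a : A) (m : ℕ) : Prop :=
  ∃ c : K, c ≠ 0 ∧ (δ ^ m) a = c • 1

namespace HasScalarSymbol

theorem one : HasScalarSymbol δ 1 0 := ⟨1, one_ne_zero, by simp⟩

theorem smul {a : A} {m : ℕ} (ha : HasScalarSymbol δ a m) {c : K} (hc : c ≠ 0) :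
    HasScalarSymbol δ (c • a) m := by
  obtain ⟨u, hu, hau⟩ := ha
  exact ⟨c * u, mul_ne_zero hc hu, by rw [map_smul, hau, smul_smul]⟩

theorem pow_apply {a : A} {m k : ℕ} (ha : HasScalarSymbol δ a (k + m)) :
    HasScalarSymbol δ ((δ ^ k) a) m := by
  rwa [HasScalarSymbol, ← Module.End.mul_apply, ← pow_add, add_comm m k]

theorem add_of_pow_apply_eq_zero {a b : A} {m : ℕ} (ha : (δ ^ m) a = 0)
    (hb : HasScalarSymbol δ b m) : HasScalarSymbol δ (a + b) m := by
  obtain ⟨u, hu, hbu⟩ := hb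
  exact ⟨u, hu, by rw [map_add, ha, zero_add, hbu]⟩

theorem exists_pow_apply_sub_smul_eq_zero {a b : A} {m : ℕ} (ha : HasScalarSymbol δ a m)
    (hb : HasScalarSymbol δ b m) : ∃ t : K, (δ ^ m) (a - t • b) = 0 := by
  obtain ⟨u, -, hau⟩ := ha
  obtain ⟨v, hv, hbv⟩ := hb
  exact ⟨u / v, by rw [map_sub, map_smul, hau, hbv, smul_smul, div_mul_cancel₀ u hv, sub_self]⟩

theorem pow_apply_ne_zero [Nontrivial A] {a : A} {m : ℕ} (ha : HasScalarSymbol δ a m) :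
    (δ ^ m) a ≠ 0 := by
  obtain ⟨u, hu, hau⟩ := ha
  exact hau ▸ smul_ne_zero hu one_ne_zero

theorem pow_apply_eq_zero_of_lt (hδ : IsDerivation δ) {a : A} {m k : ℕ}
    (ha : HasScalarSymbol δ a m) (hmk : m < k) : (δ ^ k) a = 0 := by
  obtain ⟨u, -, hau⟩ := ha
  refine Module.End.pow_map_zero_of_le hmk ?_
  rw [pow_succ', Module.End.mul_apply, hau, map_smul, hδ.map_one, smul_zero]

theorem mul [CharZero K] (hδ : IsDerivation δ) {a b : A} {m k : ℕ}
    (ha : HasScalarSymbol δ a m) (hb : HasScalarSymbol δ b k) :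
    HasScalarSymbol δ (a * b) (m + k) := by
  have hlead := hδ.pow_add_apply_mul (fun _ hi => ha.pow_apply_eq_zero_of_lt hδ hi)
    (fun _ hj => hb.pow_apply_eq_zero_of_lt hδ hj)
  obtain ⟨u, hu, hau⟩ := ha
  obtain ⟨v, hv, hbv⟩ := hb
  have hchoose : ((m + k).choose m : K) ≠ 0 :=
    Nat.cast_ne_zero.2 (Nat.choose_pos (Nat.le_add_right m k)).ne'
  refine ⟨(m + k).choose m * (u * v), mul_ne_zero hchoose (mul_ne_zero hu hv), ?_⟩
  rw [hlead, hau, hbv, smul_mul_smul_comm, mul_one, mul_smul _ (u * v), Nat.cast_smul_eq_nsmul]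

theorem pow [CharZero K] (hδ : IsDerivation δ) {a : A} {m : ℕ} (ha : HasScalarSymbol δ a m)
    (k : ℕ) : HasScalarSymbol δ (a ^ k) (m * k) := by
  induction k with
  | zero => simpa using one
  | succ k ih => exact pow_succ a k ▸ ih.mul hδ ha

theorem of_mem_adjoin [CharZero K] (hδ : IsDerivation δ) {P : A} {n : ℕ} (hn : 0 < n)
    (hP : HasScalarSymbol δ P n) {a : A} (ha : a ∈ Algebra.adjoin K {P}) (ha₀ : a ≠ 0) :
    ∃ k, HasScalarSymbol δ a (n * k) := by
  obtain ⟨g, rfl⟩ := (Algebra.adjoin_singleton_eq_range_aeval K P).le ha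
  have hg : g ≠ 0 := by
    rintro rfl
    exact ha₀ (map_zero _)
  refine ⟨g.natDegree, ?_⟩
  change HasScalarSymbol δ (Polynomial.aeval P g) _
  rw [Polynomial.aeval_eq_sum_range, Finset.sum_range_succ]
  refine add_of_pow_apply_eq_zero ?_
    ((hP.pow hδ g.natDegree).smul (Polynomial.leadingCoeff_ne_zero.2 hg))
  rw [map_sum]
  refine Finset.sum_eq_zero fun i hi => ?_
  have hlt : n * i < n * g.natDegree := Nat.mul_lt_mul_of_pos_left (Finset.mem_range.1 hi) hn
  rw [map_smul, (hP.pow hδ i).pow_apply_eq_zero_of_lt hδ hlt, smul_zero]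

end HasScalarSymbol

theorem eq_zero_of_sum_eq_zero_of_injective_order [Nontrivial A] (hδ : IsDerivation δ)
    {ι : Type*} {s : Finset ι} {a : ι → A} {order : ι → ℕ} (horder : Function.Injective order)
    (ha : ∀ i, a i ≠ 0 → HasScalarSymbol δ (a i) (order i)) (hsum : ∑ i ∈ s, a i = 0) :
    ∀ i ∈ s, a i = 0 := by
  classical
  by_contra! hne
  have hsupport : (s.filter fun i => a i ≠ 0).Nonempty := Finset.filter_nonempty_iff.2 hne
  obtain ⟨top, htop, hmax⟩ := Finset.exists_max_image _ order hsupport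
  obtain ⟨htops, htop₀⟩ := Finset.mem_filter.1 htop
  refine (ha top htop₀).pow_apply_ne_zero ?_
  have hlower : ∀ j ∈ s, j ≠ top → (δ ^ order top) (a j) = 0 := by
    intro j hjs hj
    by_cases hj₀ : a j = 0
    · rw [hj₀, map_zero]
    · have hle : order j ≤ order top := hmax j (Finset.mem_filter.2 ⟨hjs, hj₀⟩)
      exact (ha j hj₀).pow_apply_eq_zero_of_lt hδ (hle.lt_of_ne (horder.ne hj))
  calc (δ ^ order top) (a top) = ∑ j ∈ s, (δ ^ order top) (a j) :=
        (Finset.sum_eq_single_of_mem top htops hlower).symm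
    _ = 0 := by rw [← map_sum, hsum, map_zero]

theorem le_of_forall_exists_hasScalarSymbol [Nontrivial A] {S T : Submodule K A}
    (hST : S ≤ T) (hT : ∀ a ∈ T, a ≠ 0 → ∃ m, HasScalarSymbol δ a m)
    (hS : ∀ a ∈ T, ∀ m, HasScalarSymbol δ a m → ∃ b ∈ S, HasScalarSymbol δ b m) : T ≤ S := by
  suffices hind : ∀ m, ∀ a ∈ T, HasScalarSymbol δ a m → a ∈ S by
    intro a ha
    by_cases ha₀ : a = 0
    · exact ha₀ ▸ S.zero_mem
    · obtain ⟨m, ham⟩ := hT a ha ha₀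
      exact hind m a ha ham
  intro m
  induction m using Nat.strong_induction_on with
  | _ m ih =>
    intro a ha ham
    obtain ⟨b, hb, hbm⟩ := hS a ha m ham
    obtain ⟨t, ht⟩ := ham.exists_pow_apply_sub_smul_eq_zero hbm
    refine (S.sub_mem_iff_left (S.smul_mem t hb)).1 ?_
    by_cases hab : a - t • b = 0
    · exact hab ▸ S.zero_mem
    have habT : a - t • b ∈ T := T.sub_mem ha (T.smul_mem t (hST hb))
    obtain ⟨k, hk⟩ := hT _ habT hab
    have hkm : k < m := by
      by_contra! hmk
      exact hk.pow_apply_ne_zero (Module.End.pow_map_zero_of_le hmk ht)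
    exact ih k hkm _ habT hk

theorem exists_hasScalarSymbol_of_commute [CharZero K] (hδ : IsDerivation δ) {P : A} {n : ℕ}
    (hP : HasScalarSymbol δ P (n + 1))
    (hconst : ∀ q, δ q = 0 → Commute ((δ ^ n) P) q → ∃ c : K, q = c • 1)
    {Q : A} (hQ : Q ∈ hδ.nilpotentSubalgebra) (hPQ : Commute P Q) (hQ₀ : Q ≠ 0) :
    ∃ m, HasScalarSymbol δ Q m := by
  obtain ⟨m, hm, hm_succ⟩ : ∃ m, (δ ^ m) Q ≠ 0 ∧ (δ ^ (m + 1)) Q = 0 :=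
    Nat.exists_not_and_succ_of_not_zero_of_exists hQ₀ hQ
  have hcentral : ∀ i > n, ∀ d, Commute ((δ ^ i) P) d := by
    intro i hi d
    rcases (Nat.succ_le_of_lt hi).eq_or_lt with rfl | hlt
    · obtain ⟨c, -, hc⟩ := hP
      exact hc ▸ (Commute.one_left d).smul_left c
    · exact (hP.pow_apply_eq_zero_of_lt hδ hlt) ▸ Commute.zero_left d
  have hlead := hδ.pow_add_apply_commutator (l := m) hcentral
    (fun j hj => Module.End.pow_map_zero_of_le hj hm_succ)
  have hcomm : Commute ((δ ^ n) P) ((δ ^ m) Q) := by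
    have hchoose : ((n + m).choose n : K) ≠ 0 :=
      Nat.cast_ne_zero.2 (Nat.choose_pos (Nat.le_add_right n m)).ne'
    rw [sub_eq_zero.2 hPQ.eq, map_zero, ← Nat.cast_smul_eq_nsmul K] at hlead
    exact sub_eq_zero.1 ((smul_eq_zero_iff_right hchoose).1 hlead.symm)
  obtain ⟨c, hc⟩ := hconst _ (by rwa [pow_succ', Module.End.mul_apply] at hm_succ) hcomm
  refine ⟨m, c, ?_, hc⟩
  rintro rfl
  exact hm (by rw [hc, zero_smul])

end ScalarSymbol

section FreeModule

variable {K A : Type*} [Field K] [Ring A] [Algebra K A] {P : A}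

theorem linearIndependent_of_injective_order_mod [CharZero K] [Nontrivial A]
    {δ : Module.End K A} (hδ : IsDerivation δ) {n : ℕ} (hn : 0 < n) (hP : HasScalarSymbol δ P n)
    {ι : Type*} {b : ι → A} {o : ι → ℕ} (hb : ∀ i, HasScalarSymbol δ (b i) (o i))
    (ho : Function.Injective fun i => o i % n) :
    LinearIndependent (Algebra.adjoin K {P}) b := by
  refine linearIndependent_iff'.2 fun s g hsum i hi => ?_
  have hcoeff : ∀ i, ∃ k, g i ≠ 0 → HasScalarSymbol δ (g i : A) (n * k) := by
    intro i
    by_cases hgi : g i = 0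
    · exact ⟨0, fun h => absurd hgi h⟩
    · obtain ⟨k, hk⟩ := hP.of_mem_adjoin hδ hn (g i).2 fun h => hgi (Subtype.ext h)
      exact ⟨k, fun _ => hk⟩
  choose k hk using hcoeff
  have horder : Function.Injective fun i => n * k i + o i := fun i j hij =>
    ho (by simpa only [Nat.mul_add_mod] using congrArg (· % n) hij)
  have hterm (i) (hgi : g i ≠ 0) : HasScalarSymbol δ (g i • b i) (n * k i + o i) :=
    (hk i hgi).mul hδ (hb i)
  have hzero : g i • b i = 0 := eq_zero_of_sum_eq_zero_of_injective_order hδ horder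
    (fun j hj => hterm j (left_ne_zero_of_smul hj)) hsum i hi
  by_contra hgi
  exact (hterm i hgi).pow_apply_ne_zero (by rw [hzero, map_zero])

theorem exists_basis_of_forall_hasScalarSymbol [CharZero K] [Nontrivial A] {δ : Module.End K A}
    (hδ : IsDerivation δ) {n : ℕ} (hn : 0 < n) (hP : HasScalarSymbol δ P n)
    (C : Submodule (Algebra.adjoin K {P}) A)
    (hC : ∀ Q ∈ C, Q ≠ 0 → ∃ m, HasScalarSymbol δ Q m) :
    ∃ r ≤ n, ∃ b : Fin r → A, LinearIndependent (Algebra.adjoin K {P}) b ∧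
      Submodule.span (Algebra.adjoin K {P}) (Set.range b) = C := by
  obtain ⟨r, hr, o, ho, hinj, hrep⟩ :=
    exists_residue_representatives hn {m | ∃ Q ∈ C, HasScalarSymbol δ Q m}
  choose b hbC hbo using ho
  have hspan : Submodule.span (Algebra.adjoin K {P}) (Set.range b) ≤ C :=
    Submodule.span_le.2 (Set.range_subset_iff.2 hbC)
  refine ⟨r, hr, b, linearIndependent_of_injective_order_mod hδ hn hP hbo hinj,
    hspan.antisymm ?_⟩
  refine le_of_forall_exists_hasScalarSymbol (S := (Submodule.span _ _).restrictScalars K)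
    (T := C.restrictScalars K) hspan hC fun Q hQ m hQm => ?_
  obtain ⟨i, k, rfl⟩ := hrep m ⟨Q, hQ, hQm⟩
  have hbi : b i ∈ Submodule.span (Algebra.adjoin K {P}) (Set.range b) :=
    Submodule.subset_span ⟨i, rfl⟩
  have hPk : P ^ k ∈ Algebra.adjoin K {P} := pow_mem (Algebra.self_mem_adjoin_singleton K P) k
  exact ⟨P ^ k * b i, Submodule.smul_mem _ (⟨P ^ k, hPk⟩ : Algebra.adjoin K {P}) hbi,
    (hP.pow hδ k).mul hδ (hbo i)⟩

/-- The centralizer of `P` in the subalgebra `B`, as a module over `K[P]`. -/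
def centralizerModule {B : Subalgebra K A} (hP : P ∈ B) : Submodule (Algebra.adjoin K {P}) A where
  carrier := {Q | Q ∈ B ∧ Commute P Q}
  zero_mem' := ⟨B.zero_mem, Commute.zero_right P⟩
  add_mem' hQ hR := ⟨B.add_mem hQ.1 hR.1, hQ.2.add_right hR.2⟩
  smul_mem' a _ hQ :=
    ⟨B.mul_mem (Algebra.adjoin_le (Set.singleton_subset_iff.2 hP) a.2) hQ.1,
      (Algebra.commute_of_mem_adjoin_self a.2).mul_right hQ.2⟩

theorem mem_span_adjoin_singleton_iff {ι : Type*} [Fintype ι] {b : ι → A} {Q : A} :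
    Q ∈ Submodule.span (Algebra.adjoin K {P}) (Set.range b) ↔
      ∃ g : ι → Polynomial K, Q = ∑ i, Polynomial.aeval P (g i) * b i := by
  rw [Submodule.mem_span_range_iff_exists_fun]
  constructor
  · rintro ⟨c, rfl⟩
    choose g hg using fun i => (Algebra.adjoin_singleton_eq_range_aeval K P).le (c i).2
    exact ⟨g, Finset.sum_congr rfl fun i _ => congrArg (· * b i) (hg i).symm⟩
  · rintro ⟨g, rfl⟩
    exact ⟨fun i => ⟨Polynomial.aeval P (g i), Polynomial.aeval_mem_adjoin_singleton K P⟩, rfl⟩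

end FreeModule

section WeylAlgebra

open Polynomial

variable (R : Type*) [CommRing R]

/-- The Weyl algebra over `R`, realized as an algebra of operators on `R[X]`. In positive
characteristic `p` this differs from the algebra given by generators and relations, as
`derivative ^ p = 0`. -/
def weylAlgebra : Subalgebra R (Module.End R R[X]) :=
  Algebra.adjoin R ({derivative} ∪ Set.range (LinearMap.mul R R[X]))

/-- The derivation `Q ↦ [Q, X]`, which is formal differentiation of differential operators with
respect to `derivative`. -/
def commutatorX : Module.End R (Module.End R R[X]) :=
  LinearMap.mulRight R (LinearMap.mul R R[X] X) - LinearMap.mulLeft R (LinearMap.mul R R[X] X)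

theorem isDerivation_commutatorX : IsDerivation (commutatorX R) :=
  isDerivation_mulRight_sub_mulLeft _

variable {R}

theorem commutatorX_apply_apply (Q : Module.End R R[X]) (g : R[X]) :
    commutatorX R Q g = Q (X * g) - X * Q g := rfl

theorem commutatorX_mul (f : R[X]) : commutatorX R (LinearMap.mul R R[X] f) = 0 :=
  LinearMap.ext fun g => sub_eq_zero.2 (mul_left_comm f X g)

theorem commutatorX_derivative : commutatorX R derivative = 1 := by
  refine LinearMap.ext fun g => ?_
  simp [commutatorX_apply_apply]

theorem eq_mul_of_commutatorX_eq_zero {Q : Module.End R R[X]} (hQ : commutatorX R Q = 0) :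
    Q = LinearMap.mul R R[X] (Q 1) := by
  have hX (g : R[X]) : Q (X * g) = X * Q g := sub_eq_zero.1 (LinearMap.congr_fun hQ g)
  have hXpow (i : ℕ) : Q (X ^ i) = X ^ i * Q 1 := by
    induction i with
    | zero => simp
    | succ i ih => rw [pow_succ', hX, ih, mul_assoc]
  refine Polynomial.lhom_ext' fun i => LinearMap.ext_ring ?_
  change Q (monomial i 1) = Q 1 * monomial i 1
  rw [monomial_one_right_eq_X_pow, hXpow, mul_comm]

theorem mul_C_eq_smul_one (c : R) :
    LinearMap.mul R R[X] (C c) = c • (1 : Module.End R R[X]) :=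
  LinearMap.ext fun _ => (smul_eq_C_mul c).symm

theorem weylAlgebra_le_nilpotentSubalgebra :
    weylAlgebra R ≤ (isDerivation_commutatorX R).nilpotentSubalgebra := by
  refine Algebra.adjoin_le (Set.union_subset (Set.singleton_subset_iff.2 ⟨2, ?_⟩) ?_)
  · rw [pow_two, Module.End.mul_apply, commutatorX_derivative,
      (isDerivation_commutatorX R).map_one]
  · rintro _ ⟨f, rfl⟩
    exact ⟨1, by rw [pow_one, commutatorX_mul]⟩

theorem sum_mul_derivative_pow_mem_weylAlgebra {n : ℕ} (p : Fin n → R[X]) :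
    (∑ i, LinearMap.mul R R[X] (p i) * derivative ^ (i : ℕ)) ∈ weylAlgebra R := by
  have hderivative : derivative ∈ weylAlgebra R := Algebra.subset_adjoin (Or.inl rfl)
  have hmul (f : R[X]) : LinearMap.mul R R[X] f ∈ weylAlgebra R :=
    Algebra.subset_adjoin (Or.inr ⟨f, rfl⟩)
  exact sum_mem fun i _ => mul_mem (hmul (p i)) (pow_mem hderivative i)

variable {K : Type*} [Field K]

theorem hasScalarSymbol_derivative : HasScalarSymbol (commutatorX K) derivative 1 :=
  ⟨1, one_ne_zero, by rw [pow_one, commutatorX_derivative, one_smul]⟩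

theorem exists_eq_smul_one_of_commute [CharZero K] {T q : Module.End K K[X]}
    (hT : HasScalarSymbol (commutatorX K) T 1) (hq : commutatorX K q = 0) (hTq : Commute T q) :
    ∃ c : K, q = c • 1 := by
  obtain ⟨c, hc, hTc⟩ := hT
  have hlower : commutatorX K (T - c • derivative) = 0 := by
    rw [map_sub, map_smul, commutatorX_derivative, ← hTc, pow_one, sub_self]
  obtain ⟨f, hT_apply⟩ : ∃ f, ∀ g, T g = f * g + c • derivative g :=
    ⟨_, fun g => sub_eq_iff_eq_add.1
      (LinearMap.congr_fun (eq_mul_of_commutatorX_eq_zero hlower) g)⟩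
  have hq_apply (g : K[X]) : q g = q 1 * g :=
    LinearMap.congr_fun (eq_mul_of_commutatorX_eq_zero hq) g
  have hderiv : derivative (q 1) = 0 := by
    have hcomm : T (q 1) = q (T 1) := LinearMap.congr_fun hTq 1
    rw [hq_apply (T 1), hT_apply (q 1), hT_apply 1] at hcomm
    simpa [mul_comm, hc] using hcomm
  refine ⟨(q 1).coeff 0, ?_⟩
  rw [← mul_C_eq_smul_one, ← eq_C_of_derivative_eq_zero hderiv]
  exact eq_mul_of_commutatorX_eq_zero hq

theorem hasScalarSymbol_sum_mul_derivative_pow [CharZero K] {n : ℕ} {p : Fin (n + 1) → K[X]}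
    {c : K} (hc : c ≠ 0) (hpn : p (Fin.last n) = C c) :
    HasScalarSymbol (commutatorX K)
      (∑ i, LinearMap.mul K K[X] (p i) * derivative ^ (i : ℕ)) n := by
  have hδ := isDerivation_commutatorX K
  have hpow (i : ℕ) : HasScalarSymbol (commutatorX K) (derivative ^ i) i := by
    simpa only [one_mul] using hasScalarSymbol_derivative.pow hδ i
  rw [Fin.sum_univ_castSucc, hpn, mul_C_eq_smul_one, smul_one_mul, Fin.val_last]
  refine ((hpow n).smul hc).add_of_pow_apply_eq_zero ?_
  rw [map_sum]
  refine Finset.sum_eq_zero fun i _ => ?_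
  have hterm := hδ.pow_add_apply_mul_eq_zero (k := 1) (l := i) (commutatorX_mul (p i.castSucc))
    ((hpow i).pow_apply_eq_zero_of_lt hδ (Nat.lt_succ_self i))
  exact Module.End.pow_map_zero_of_le (by lia) hterm

theorem exists_basis_centralizerModule_weylAlgebra [CharZero K] {P : Module.End K K[X]}
    (hP : P ∈ weylAlgebra K) {n : ℕ} (hn : 0 < n) (hPn : HasScalarSymbol (commutatorX K) P n) :
    ∃ r ≤ n, ∃ b : Fin r → Module.End K K[X], LinearIndependent (Algebra.adjoin K {P}) b ∧
      Submodule.span (Algebra.adjoin K {P}) (Set.range b) = centralizerModule hP := by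
  have hδ := isDerivation_commutatorX K
  refine exists_basis_of_forall_hasScalarSymbol hδ hn hPn _ fun Q hQ hQ₀ => ?_
  obtain ⟨k, rfl⟩ := Nat.exists_eq_add_of_le' hn
  exact exists_hasScalarSymbol_of_commute hδ hPn
    (fun _ hq hcomm => exists_eq_smul_one_of_commute hPn.pow_apply hq hcomm)
    (weylAlgebra_le_nilpotentSubalgebra hQ.1) hQ.2 hQ₀

end WeylAlgebra

theorem weyl_centralizer_free_general {K : Type*} [Field K] [CharZero K] (n : ℕ) (hn : 1 ≤ n)
    (p : Fin (n + 1) → Polynomial K) (c : K) (hc : c ≠ 0)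
    (hpn : p (Fin.last n) = Polynomial.C c)
    (P : Module.End K (Polynomial K))
    (hP : P = ∑ i : Fin (n + 1),
      LinearMap.mul K (Polynomial K) (p i) * Polynomial.derivative ^ (i : ℕ)) :
    ∃ (r : ℕ) (b : Fin r → Module.End K (Polynomial K)), r ≤ n ∧
      (∀ i, b i ∈ weylAlgebra K ∧ P * b i = b i * P) ∧
      (∀ Q, Q ∈ weylAlgebra K → P * Q = Q * P →
        ∃ g : Fin r → Polynomial K, Q = ∑ i, Polynomial.aeval P (g i) * b i) ∧
      (∀ g : Fin r → Polynomial K,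
        ∑ i, Polynomial.aeval P (g i) * b i = 0 → ∀ i, Polynomial.aeval P (g i) = 0) := by
  have hPW : P ∈ weylAlgebra K := hP ▸ sum_mul_derivative_pow_mem_weylAlgebra p
  have hPn : HasScalarSymbol (commutatorX K) P n :=
    hP ▸ hasScalarSymbol_sum_mul_derivative_pow hc hpn
  obtain ⟨r, hr, b, hindep, hspan⟩ := exists_basis_centralizerModule_weylAlgebra hPW hn hPn
  have hmem (Q) : Q ∈ Submodule.span (Algebra.adjoin K {P}) (Set.range b) ↔
      Q ∈ weylAlgebra K ∧ Commute P Q := by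
    rw [hspan]
    rfl
  refine ⟨r, b, hr, fun i => (hmem (b i)).1 (Submodule.subset_span ⟨i, rfl⟩),
    fun Q hQ hPQ => mem_span_adjoin_singleton_iff.1 ((hmem Q).2 ⟨hQ, hPQ⟩), fun g hg i => ?_⟩
  let coeff (i) : Algebra.adjoin K {P} :=
    ⟨Polynomial.aeval P (g i), Polynomial.aeval_mem_adjoin_singleton K P⟩
  exact congrArg Subtype.val (Fintype.linearIndependent_iff.1 hindep coeff hg i)

/-- The centralizer in `W` of an operator `P = Σ_{i=0}^n M_{p i} ∘ D^i`, `n ≥ 1`, with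
nonzero constant leading coefficient, is a free `ℂ[P]`-module on at most `n` generators. -/
theorem weyl_centralizer_free (n : ℕ) (hn : 1 ≤ n)
    (p : Fin (n + 1) → Polynomial ℂ) (c : ℂ) (hc : c ≠ 0)
    (hpn : p (Fin.last n) = Polynomial.C c)
    (P : Module.End ℂ (Polynomial ℂ))
    (hP : P = ∑ i : Fin (n + 1), M (p i) * D ^ (i : ℕ)) :
    ∃ (r : ℕ) (b : Fin r → Module.End ℂ (Polynomial ℂ)), r ≤ n ∧
      (∀ i, b i ∈ W ∧ P * b i = b i * P) ∧
      (∀ Q, Q ∈ W → P * Q = Q * P →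
        ∃ g : Fin r → Polynomial ℂ, Q = ∑ i, Polynomial.aeval P (g i) * b i) ∧
      (∀ g : Fin r → Polynomial ℂ,
        ∑ i, Polynomial.aeval P (g i) * b i = 0 → ∀ i, Polynomial.aeval P (g i) = 0) :=
  weyl_centralizer_free_general n hn p c hc hpn P hP

end
end

section
/- Let k be a field and let p ∈ k[y] be a polynomial of degree strictly greater than 1. If f, g ∈ k[y] satisfy f(y)·g(p(y)) = f(p(y))·g(y) (i.e., f · (g ∘ p) = (f ∘ p) · g) and g ≠ 0, then there exists a scalar α ∈ k such that f = α·g. -/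
/-! The solutions `f` of `f * g.comp p = f.comp p * g` are closed under linear combinations and
include `g`. If `p` has degree `d > 1`, comparing degrees in the identity gives
`deg f + d * deg g = d * deg f + deg g`, so every nonzero solution has the degree of `g`.
Hence the combination of `f` and `g` that cancels the coefficient at `deg g` is zero. -/

open Polynomial

theorem comp_ne_zero_of_degree_pos {R : Type*} [Semiring R] [NoZeroDivisors R] {p f : R[X]}
    (hp : 0 < p.degree) (hf : f ≠ 0) : f.comp p ≠ 0 := by
  intro h
  obtain ⟨-, hp_const⟩ := (comp_eq_zero_iff.mp h).resolve_left hf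
  exact hp.not_ge (degree_le_zero_iff.mpr hp_const)

theorem natDegree_eq_of_comp_identity {R : Type*} [Semiring R] [NoZeroDivisors R] {p f g : R[X]}
    (hp : 1 < p.degree) (hf : f ≠ 0) (hg : g ≠ 0) (h : f * g.comp p = f.comp p * g) :
    f.natDegree = g.natDegree := by
  have hp_pos : 0 < p.degree := zero_lt_one.trans hp
  have hgp : g.comp p ≠ 0 := comp_ne_zero_of_degree_pos hp_pos hg
  have hfp : f.comp p ≠ 0 := comp_ne_zero_of_degree_pos hp_pos hf
  have hdeg : f.natDegree + g.natDegree * p.natDegree =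
      f.natDegree * p.natDegree + g.natDegree := by
    rw [← natDegree_comp, ← natDegree_comp, ← natDegree_mul hf hgp, ← natDegree_mul hfp hg, h]
  have hp_nat : 1 < p.natDegree := coe_lt_degree.mp hp
  have hfactor : (f.natDegree - g.natDegree : ℤ) * (p.natDegree - 1) = 0 := by
    zify at hdeg
    linear_combination -hdeg
  rcases mul_eq_zero.mp hfactor with h_eq | h_one <;> omega

theorem proportional_of_comp_identity_general {R : Type*} [CommRing R] [NoZeroDivisors R]
    {p f g : R[X]} (hp : 1 < p.degree) (h : f * g.comp p = f.comp p * g) :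
    C g.leadingCoeff * f = C (f.coeff g.natDegree) * g := by
  rcases eq_or_ne g 0 with rfl | hg
  · simp
  set r := C g.leadingCoeff * f - C (f.coeff g.natDegree) * g with hr
  have hr_comp : r * g.comp p = r.comp p * g := by
    simp only [hr, sub_comp, mul_comp, C_comp]
    linear_combination C g.leadingCoeff * h
  have hr_coeff : r.coeff g.natDegree = 0 := by
    rw [hr, coeff_sub, coeff_C_mul, coeff_C_mul, coeff_natDegree, mul_comm, sub_self]
  have hr_zero : r = 0 := by
    by_contra hr_ne
    have hdeg := natDegree_eq_of_comp_identity hp hr_ne hg hr_comp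
    exact leadingCoeff_ne_zero.mpr hr_ne (by rwa [leadingCoeff, hdeg])
  exact sub_eq_zero.mp hr_zero

/-- If `p ∈ k[y]` has degree `> 1` and `f, g ∈ k[y]` satisfy
`f(y)·g(p(y)) = f(p(y))·g(y)` with `g ≠ 0`, then `f = α·g` for some scalar `α ∈ k`. -/
theorem proportional_of_comp_identity {k : Type*} [Field k]
    (p f g : Polynomial k) (hp : 1 < p.degree) (hg : g ≠ 0)
    (h : f * g.comp p = f.comp p * g) :
    ∃ α : k, f = Polynomial.C α * g := by
  refine ⟨g.leadingCoeff⁻¹ * f.coeff g.natDegree, ?_⟩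
  rw [C_mul, mul_assoc, ← proportional_of_comp_identity_general hp h, ← mul_assoc, ← C_mul,
    inv_mul_cancel₀ (leadingCoeff_ne_zero.mpr hg), C_1, one_mul]
end

section
/- Let k be a field, let p ∈ k[y] have degree strictly greater than 1, and let σ denote the map k[y] → k[y], f ↦ f ∘ p (composition with p), so that σ^j(f) = f ∘ p ∘ ⋯ ∘ p (j-fold composite). Let n ≥ 1 and m ≥ 0 be integers and let a, b, c ∈ k[y] be nonzero polynomials satisfying a·σ^n(b) = b·σ^m(a) and a·σ^n(c) = c·σ^m(a). Then there exists a scalar α ∈ k such that b = α·c. -/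
/-!
Composition with `p` is linear, so for fixed `a` and `e` the solutions `b` of `a * σ^n(b) = b * e`
form a submodule of the polynomial ring. Comparing degrees, a nonzero solution satisfies
`deg b * ((deg p)^n - 1) = deg e - deg a`, so all nonzero solutions have the same degree. Cancelling
the leading terms of two solutions gives a solution of smaller degree, which must therefore vanish.
-/

open Polynomial

theorem iterate_comp_right_eq_comp_iterate {R : Type*} [CommSemiring R] (p f : R[X]) (n : ℕ) :
    (fun g : R[X] => g.comp p)^[n] f = f.comp (p.comp^[n] X) := by
  induction n generalizing f with
  | zero => simp
  | succ n ih => rw [Function.iterate_succ_apply, ih, comp_assoc, Function.iterate_succ_apply']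

theorem natDegree_mul_sub_one_add_natDegree_of_mul_comp_eq_mul {R : Type*} [Semiring R]
    [NoZeroDivisors R] {q a e b : R[X]} (hq : 0 < q.natDegree) (ha : a ≠ 0) (hb : b ≠ 0)
    (h : a * b.comp q = b * e) :
    b.natDegree * (q.natDegree - 1) + a.natDegree = e.natDegree := by
  have hbq : b.comp q ≠ 0 := fun h0 => by
    rcases comp_eq_zero_iff.1 h0 with h0 | ⟨-, hconst⟩
    · exact hb h0
    · exact hq.ne' (natDegree_eq_zero.2 ⟨_, hconst.symm⟩)
  have he : e ≠ 0 := right_ne_zero_of_mul (h ▸ mul_ne_zero ha hbq)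
  have hdeg : a.natDegree + b.natDegree * q.natDegree = b.natDegree + e.natDegree := by
    rw [← natDegree_comp, ← natDegree_mul ha hbq, h, natDegree_mul hb he]
  have hle : b.natDegree ≤ b.natDegree * q.natDegree := Nat.le_mul_of_pos_right _ hq
  rw [Nat.mul_sub_one]
  omega

/-- The module of polynomials `b` with `a * b.comp q = b * e`: those on which the twisted
operator `b ↦ a * b.comp q` acts as multiplication by the polynomial `e`. -/
def twistedEigenspace {R : Type*} [CommSemiring R] (q a e : R[X]) : Submodule R R[X] where
  carrier := {b | a * b.comp q = b * e}
  zero_mem' := by simp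
  add_mem' {b c} (hb : _ = _) (hc : _ = _) := by
    simp only [Set.mem_ofPred_eq, add_comp, mul_add, add_mul, hb, hc]
  smul_mem' r b (hb : _ = _) := by
    simp only [Set.mem_ofPred_eq, smul_comp, mul_smul_comm, smul_mul_assoc, hb]

section CommRing

variable {R : Type*} [CommRing R]

theorem leadingCoeff_smul_comm_of_forall_mem_natDegree_eq {S : Submodule R R[X]} {d : ℕ}
    (hS : ∀ f ∈ S, f ≠ 0 → f.natDegree = d) {f g : R[X]} (hf : f ∈ S) (hg : g ∈ S) :
    g.leadingCoeff • f = f.leadingCoeff • g := by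
  rcases eq_or_ne f 0 with rfl | hf0
  · simp
  rcases eq_or_ne g 0 with rfl | hg0
  · simp
  by_contra hne
  have hsub : g.leadingCoeff • f - f.leadingCoeff • g ≠ 0 := sub_ne_zero.2 hne
  have hdeg := hS _ (S.sub_mem (S.smul_mem _ hf) (S.smul_mem _ hg)) hsub
  apply leadingCoeff_ne_zero.2 hsub
  rw [leadingCoeff, hdeg, coeff_sub, coeff_smul, coeff_smul, leadingCoeff, leadingCoeff,
    hS f hf hf0, hS g hg hg0, smul_eq_mul, smul_eq_mul, mul_comm, sub_self]

theorem leadingCoeff_smul_comm_of_mem_twistedEigenspace [NoZeroDivisors R] {q a e b c : R[X]}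
    (hq : 1 < q.natDegree) (ha : a ≠ 0) (hb : b ∈ twistedEigenspace q a e)
    (hc : c ∈ twistedEigenspace q a e) : c.leadingCoeff • b = b.leadingCoeff • c := by
  have hdeg : ∀ f ∈ twistedEigenspace q a e, f ≠ 0 →
      f.natDegree = (e.natDegree - a.natDegree) / (q.natDegree - 1) := fun f hf hf0 => by
    have h := natDegree_mul_sub_one_add_natDegree_of_mul_comp_eq_mul (by lia) ha hf0 hf
    exact Nat.eq_div_of_mul_eq_left (Nat.sub_pos_of_lt hq).ne' (Nat.eq_sub_of_add_eq h)
  exact leadingCoeff_smul_comm_of_forall_mem_natDegree_eq hdeg hb hc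

theorem proportional_of_leading_coeff_relations_general [IsDomain R] {p : R[X]}
    (hp : 1 < p.natDegree) {n : ℕ} (hn : n ≠ 0) {a e b c : R[X]} (ha : a ≠ 0)
    (hb : a * (fun f : R[X] => f.comp p)^[n] b = b * e)
    (hc : a * (fun f : R[X] => f.comp p)^[n] c = c * e) :
    c.leadingCoeff • b = b.leadingCoeff • c := by
  rw [iterate_comp_right_eq_comp_iterate] at hb hc
  have hq : 1 < (p.comp^[n] X).natDegree := by
    rw [natDegree_iterate_comp, natDegree_X, mul_one]
    exact Nat.one_lt_pow hn hp
  exact leadingCoeff_smul_comm_of_mem_twistedEigenspace hq ha hb hc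

end CommRing

/-- Let `σ : k[y] → k[y]` be composition with a polynomial `p` of degree `> 1`.
If nonzero polynomials `a, b, c` satisfy the leading-coefficient relations
`a·σ^n(b) = b·σ^m(a)` and `a·σ^n(c) = c·σ^m(a)` with `n ≥ 1`, then `b = α·c`
for some scalar `α ∈ k`. -/
theorem proportional_of_leading_coeff_relations {k : Type*} [Field k]
    (p : Polynomial k) (hp : 1 < p.degree) (n m : ℕ) (hn : 1 ≤ n)
    (a b c : Polynomial k) (ha : a ≠ 0) (hb : b ≠ 0) (hc : c ≠ 0)
    (h1 : a * (fun f : Polynomial k => f.comp p)^[n] b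
        = b * (fun f : Polynomial k => f.comp p)^[m] a)
    (h2 : a * (fun f : Polynomial k => f.comp p)^[n] c
        = c * (fun f : Polynomial k => f.comp p)^[m] a) :
    ∃ α : k, b = Polynomial.C α * c := by
  have h := proportional_of_leading_coeff_relations_general (coe_lt_degree.1 hp)
    (Nat.one_le_iff_ne_zero.1 hn) ha h1 h2
  refine ⟨c.leadingCoeff⁻¹ * b.leadingCoeff, ?_⟩
  rw [← smul_eq_C_mul, mul_smul, ← h, inv_smul_smul₀ (leadingCoeff_ne_zero.2 hc)]
end
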